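/- Let M be a d×d matrix measure with trace measure μ = tr_M and density D = D_M (with D(t) ≥ 0 everywhere). The map F̂ : L²(M) → (L²(μ))^d induced by f ↦ √(D(·)) f(·) is a well-defined linear isometry from L²(M) onto the closed subspace L²_D = { [g] ∈ (L²(μ))^d : g(t) ∈ Ran D(t) for μ-a.e. t }. In particular, L²(M) is a Hilbert space (complete). -/

import Mathlib

open MeasureTheory Matrix Filter
open scoped ComplexOrder

/-- The squared `L²(M)`-seminorm `⟨⟨f⟩⟩_M = ∫ ⟨D t f t, f t⟩ d tr_M t` of a `ℂ^d`-valued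
function, for a matrix measure with trace measure `μ` and trace density `D`. -/
noncomputable def quadInt {Ω : Type*} [MeasurableSpace Ω] {d : ℕ}
    (μ : MeasureTheory.Measure Ω) (D : Ω → Matrix (Fin d) (Fin d) ℂ)
    (f : Ω → Fin d → ℂ) : ℝ :=
  ∫ t, (star (f t) ⬝ᵥ ((D t) *ᵥ f t)).re ∂μ

/-- Membership in `𝓛²(M)`: measurable with finite quadratic integral. -/
def MemL2M {Ω : Type*} [MeasurableSpace Ω] {d : ℕ}
    (μ : MeasureTheory.Measure Ω) (D : Ω → Matrix (Fin d) (Fin d) ℂ)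
    (f : Ω → Fin d → ℂ) : Prop :=
  Measurable f ∧ MeasureTheory.Integrable (fun t => (star (f t) ⬝ᵥ ((D t) *ᵥ f t)).re) μ

lemma aux_iso {d : ℕ} {S : Matrix (Fin d) (Fin d) ℂ} (hS : S.PosSemidef) (x : Fin d → ℂ) :
    (star x ⬝ᵥ ((S * S) *ᵥ x)).re = ∑ i, ‖(S *ᵥ x) i‖ ^ 2 := by
  have h : star x ⬝ᵥ ((S * S) *ᵥ x) = star (S *ᵥ x) ⬝ᵥ (S *ᵥ x) := by
    rw [Matrix.star_mulVec, hS.isHermitian.eq, ← Matrix.mulVec_mulVec, Matrix.dotProduct_mulVec]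
  rw [h]
  simp only [dotProduct, Complex.re_sum, Pi.star_apply]
  refine Finset.sum_congr rfl fun i _ => ?_
  rw [← Complex.normSq_eq_norm_sq, Complex.normSq_apply]
  simp [Complex.mul_re]

lemma aux_range {d : ℕ} {S : Matrix (Fin d) (Fin d) ℂ} (hS : S.PosSemidef) (x : Fin d → ℂ) :
    ∃ v, (S * S) *ᵥ v = S *ᵥ x := by
  have hle : LinearMap.range (S * S).mulVecLin ≤ LinearMap.range S.mulVecLin := by
    rintro _ ⟨v, rfl⟩
    exact ⟨S *ᵥ v, by simp [Matrix.mulVec_mulVec]⟩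
  have hr : (S * S).rank = S.rank := by
    have := Matrix.rank_conjTranspose_mul_self S
    rwa [hS.isHermitian.eq] at this
  have heq := Submodule.eq_of_le_of_finrank_eq hle hr
  have : S *ᵥ x ∈ LinearMap.range (S * S).mulVecLin := by
    rw [heq]; exact ⟨x, by simp⟩
  obtain ⟨v, hv⟩ := this
  exact ⟨v, by simpa using hv⟩

lemma aux_bound {d : ℕ} {S : Matrix (Fin d) (Fin d) ℂ} (hS : S.PosSemidef) {e : ℝ} (he : 0 ≤ e)
    (y : Fin d → ℂ) (i : Fin d) :
    (e * ‖y i‖) ^ 2 ≤ ∑ j, ‖(S *ᵥ y + (e : ℂ) • y) j‖ ^ 2 := by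
  have h0 : 0 ≤ (star y ⬝ᵥ (S *ᵥ y)).re := by
    have := hS.dotProduct_mulVec_nonneg y
    exact (Complex.le_def.1 this).1
  have h1 : ∑ j, ‖(S *ᵥ y + (e : ℂ) • y) j‖ ^ 2 =
      ∑ j, ‖(S *ᵥ y) j‖ ^ 2 + 2 * e * (star y ⬝ᵥ (S *ᵥ y)).re + ∑ j, (e * ‖y j‖) ^ 2 := by
    simp only [dotProduct, Complex.re_sum, Pi.star_apply]
    rw [Finset.mul_sum, ← Finset.sum_add_distrib, ← Finset.sum_add_distrib]
    refine Finset.sum_congr rfl fun j _ => ?_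
    rw [mul_pow, ← Complex.normSq_eq_norm_sq, ← Complex.normSq_eq_norm_sq,
      ← Complex.normSq_eq_norm_sq, Complex.normSq_apply, Complex.normSq_apply,
      Complex.normSq_apply]
    simp [Complex.mul_re]
    ring
  have h2 : (e * ‖y i‖) ^ 2 ≤ ∑ j, (e * ‖y j‖) ^ 2 :=
    Finset.single_le_sum (f := fun j => (e * ‖y j‖) ^ 2) (fun j _ => sq_nonneg _)
      (Finset.mem_univ i)
  have h3 : 0 ≤ ∑ j, ‖(S *ᵥ y) j‖ ^ 2 := Finset.sum_nonneg fun j _ => sq_nonneg _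
  have h4 : 0 ≤ 2 * e * (star y ⬝ᵥ (S *ᵥ y)).re := by positivity
  linarith

/-- The regularisation parameter. -/
noncomputable def auxEps (n : ℕ) : ℝ := 1 / ((n : ℝ) + 1)

lemma auxEps_pos (n : ℕ) : 0 < auxEps n := by unfold auxEps; positivity

lemma auxEps_tendsto : Tendsto auxEps atTop (nhds 0) := tendsto_one_div_add_atTop_nhds_zero_nat

/-- The regularised matrix. -/
noncomputable def auxReg {d : ℕ} (S : Matrix (Fin d) (Fin d) ℂ) (n : ℕ) :
    Matrix (Fin d) (Fin d) ℂ := S + (auxEps n : ℂ) • 1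

lemma auxReg_unit {d : ℕ} {S : Matrix (Fin d) (Fin d) ℂ} (hS : S.PosSemidef) (n : ℕ) :
    IsUnit (auxReg S n).det := by
  have : (auxReg S n).PosDef := by
    refine Matrix.PosDef.posSemidef_add hS ?_
    refine Matrix.PosDef.smul Matrix.PosDef.one ?_
    exact_mod_cast auxEps_pos n
  exact (Matrix.isUnit_iff_isUnit_det _).1 this.isUnit

lemma auxReg_mulVec {d : ℕ} (S : Matrix (Fin d) (Fin d) ℂ) (n : ℕ) (y : Fin d → ℂ) :
    auxReg S n *ᵥ y = S *ᵥ y + (auxEps n : ℂ) • y := by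
  simp [auxReg, Matrix.add_mulVec, Matrix.smul_mulVec]

lemma aux_conv {d : ℕ} {S : Matrix (Fin d) (Fin d) ℂ} (hS : S.PosSemidef) (u : Fin d → ℂ) :
    Tendsto (fun n => (auxReg S n)⁻¹ *ᵥ ((S * S) *ᵥ u)) atTop (nhds (S *ᵥ u)) := by
  have key : ∀ n, (auxReg S n)⁻¹ *ᵥ ((S * S) *ᵥ u) =
      S *ᵥ u - (auxEps n : ℂ) • u
        + (auxEps n : ℂ) • ((auxEps n : ℂ) • ((auxReg S n)⁻¹ *ᵥ u)) := by
    intro n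
    have hinv : ∀ z, (auxReg S n)⁻¹ *ᵥ (auxReg S n *ᵥ z) = z := fun z => by
      rw [Matrix.mulVec_mulVec, Matrix.nonsing_inv_mul _ (auxReg_unit hS n), Matrix.one_mulVec]
    have e1 : (S * S) *ᵥ u = auxReg S n *ᵥ (S *ᵥ u - (auxEps n : ℂ) • u)
        + (auxEps n : ℂ) • ((auxEps n : ℂ) • u) := by
      rw [auxReg_mulVec, Matrix.mulVec_sub, Matrix.mulVec_smul, smul_sub, Matrix.mulVec_mulVec]
      abel
    rw [e1, Matrix.mulVec_add, hinv, Matrix.mulVec_smul, Matrix.mulVec_smul]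
  simp_rw [key]
  have hE : Tendsto (fun n => (auxEps n : ℂ)) atTop (nhds 0) := by
    have := (Complex.continuous_ofReal.tendsto 0).comp auxEps_tendsto
    simpa [Function.comp_def] using this
  have t1 : Tendsto (fun n => S *ᵥ u - (auxEps n : ℂ) • u) atTop (nhds (S *ᵥ u)) := by
    have := (tendsto_const_nhds (x := S *ᵥ u)).sub (hE.smul_const u)
    simpa using this
  have t2 : Tendsto (fun n => (auxEps n : ℂ) • ((auxEps n : ℂ) • ((auxReg S n)⁻¹ *ᵥ u)))
      atTop (nhds 0) := by
    rw [tendsto_pi_nhds]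
    intro i
    rw [Pi.zero_apply]
    set C : ℝ := Real.sqrt (∑ j, ‖u j‖ ^ 2)
    refine squeeze_zero_norm (a := fun n => auxEps n * C) (fun n => ?_) ?_
    · have hb := aux_bound hS (auxEps_pos n).le ((auxReg S n)⁻¹ *ᵥ u) i
      rw [← auxReg_mulVec, Matrix.mulVec_mulVec, Matrix.mul_nonsing_inv _ (auxReg_unit hS n),
        Matrix.one_mulVec] at hb
      have := Real.le_sqrt_of_sq_le hb
      simp only [Pi.smul_apply, smul_eq_mul, norm_mul, Complex.norm_real, Real.norm_eq_abs,
        abs_of_pos (auxEps_pos n)]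
      exact mul_le_mul_of_nonneg_left this (auxEps_pos n).le
    · simpa using auxEps_tendsto.mul_const C
  simpa using t1.add t2

lemma aux_meas_mulVec {Ω : Type*} [MeasurableSpace Ω] {d : ℕ}
    {A : Ω → Matrix (Fin d) (Fin d) ℂ} (hA : ∀ i j, Measurable fun t => A t i j)
    {f : Ω → Fin d → ℂ} (hf : Measurable f) : Measurable fun t => A t *ᵥ f t := by
  rw [measurable_pi_iff]
  intro i
  simp only [Matrix.mulVec, dotProduct]
  exact Finset.measurable_fun_sum _ fun j _ => (hA i j).mul ((measurable_pi_apply j).comp hf)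

lemma aux_meas_det {Ω : Type*} [MeasurableSpace Ω] {d : ℕ}
    {A : Ω → Matrix (Fin d) (Fin d) ℂ} (hA : ∀ i j, Measurable fun t => A t i j) :
    Measurable fun t => (A t).det := by
  simp only [Matrix.det_apply']
  exact Finset.measurable_fun_sum _ fun s _ =>
    (Finset.measurable_fun_prod _ fun j _ => hA _ _).const_mul _

lemma aux_meas_inv {Ω : Type*} [MeasurableSpace Ω] {d : ℕ}
    {A : Ω → Matrix (Fin d) (Fin d) ℂ} (hA : ∀ i j, Measurable fun t => A t i j) (i j : Fin d) :
    Measurable fun t => (A t)⁻¹ i j := by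
  simp only [Matrix.inv_def, Ring.inverse_eq_inv', Matrix.smul_apply, smul_eq_mul,
    Matrix.adjugate_apply]
  refine (aux_meas_det hA).inv.mul (aux_meas_det fun k l => ?_)
  by_cases h : k = j
  · subst h; simp
  · simpa [Matrix.updateRow_ne h] using hA k l

lemma aux_surj {Ω : Type*} [MeasurableSpace Ω] {d : ℕ} (μ : Measure Ω)
    (sD : Ω → Matrix (Fin d) (Fin d) ℂ)
    (hsDmeas : ∀ i j, Measurable fun t => sD t i j)
    (hsD : ∀ t, (sD t).PosSemidef)
    (g : Ω → Fin d → ℂ) (hg : Measurable g)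
    (hr : ∀ᵐ t ∂μ, ∃ v : Fin d → ℂ, (sD t * sD t) *ᵥ v = g t) :
    ∃ f : Ω → Fin d → ℂ, Measurable f ∧ ∀ᵐ t ∂μ, (sD t) *ᵥ f t = g t := by
  have hm : ∀ n, Measurable fun t => (auxReg (sD t) n)⁻¹ *ᵥ g t := fun n => by
    refine aux_meas_mulVec (aux_meas_inv fun i j => ?_) hg
    simp only [auxReg, Matrix.add_apply]
    exact (hsDmeas i j).add_const _
  obtain ⟨f, hf, hlim⟩ := measurable_limit_of_tendsto_metrizable_ae (μ := μ) (L := atTop)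
    (fun n => (hm n).aemeasurable) (by
      filter_upwards [hr] with t ⟨v, hv⟩
      exact ⟨_, hv ▸ aux_conv (hsD t) v⟩)
  refine ⟨f, hf, ?_⟩
  filter_upwards [hlim] with t ht
  have hE : Tendsto (fun n => (auxEps n : ℂ)) atTop (nhds 0) := by
    have := (Complex.continuous_ofReal.tendsto 0).comp auxEps_tendsto
    simpa [Function.comp_def] using this
  have h1 : Tendsto (fun n => sD t *ᵥ ((auxReg (sD t) n)⁻¹ *ᵥ g t)
      + (auxEps n : ℂ) • ((auxReg (sD t) n)⁻¹ *ᵥ g t)) atTop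
      (nhds (sD t *ᵥ f t + (0 : ℂ) • f t)) := by
    refine Tendsto.add ?_ (hE.smul ht)
    have hc : Continuous fun y : Fin d → ℂ => sD t *ᵥ y := by fun_prop
    exact (hc.tendsto _).comp ht
  have h2 : ∀ n, sD t *ᵥ ((auxReg (sD t) n)⁻¹ *ᵥ g t)
      + (auxEps n : ℂ) • ((auxReg (sD t) n)⁻¹ *ᵥ g t) = g t := fun n => by
    rw [← auxReg_mulVec, Matrix.mulVec_mulVec, Matrix.mul_nonsing_inv _ (auxReg_unit (hsD t) n),
        Matrix.one_mulVec]
  simp_rw [h2] at h1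
  simpa using tendsto_nhds_unique h1 tendsto_const_nhds

/-- Completeness of `(L²(μ))^d` phrased with plain functions, with an a.e. subsequence. -/
lemma aux_complete {Ω : Type*} [MeasurableSpace Ω] {d : ℕ} (μ : Measure Ω)
    (G : ℕ → Ω → Fin d → ℂ) (hG : ∀ n, Measurable (G n))
    (hGi : ∀ n, Integrable (fun t => ∑ i, ‖G n t i‖ ^ 2) μ)
    (hC : ∀ ε : ℝ, 0 < ε → ∃ N : ℕ, ∀ m ≥ N, ∀ n ≥ N,
        ∫ t, ∑ i, ‖G m t i - G n t i‖ ^ 2 ∂μ < ε) :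
    ∃ g : Ω → Fin d → ℂ, Measurable g ∧ Integrable (fun t => ∑ i, ‖g t i‖ ^ 2) μ ∧
      Tendsto (fun n => ∫ t, ∑ i, ‖G n t i - g t i‖ ^ 2 ∂μ) atTop (nhds 0) ∧
      ∃ ns : ℕ → ℕ, ∀ᵐ t ∂μ, Tendsto (fun k => G (ns k) t) atTop (nhds (g t)) := by
  let H : ℕ → Ω → EuclideanSpace ℂ (Fin d) := fun n t => WithLp.toLp 2 (G n t)
  have hH : ∀ n, MemLp (H n) 2 μ := fun n => by
    have hm : Measurable (H n) := (WithLp.measurable_toLp 2 _).comp (hG n)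
    rw [memLp_two_iff_integrable_sq_norm hm.aestronglyMeasurable]
    simpa [H, EuclideanSpace.norm_sq_eq] using hGi n
  let P : ℕ → Lp (EuclideanSpace ℂ (Fin d)) 2 μ := fun n => (hH n).toLp (H n)
  have nsq : ∀ p : Lp (EuclideanSpace ℂ (Fin d)) 2 μ, ‖p‖ ^ 2 = ∫ t, ‖p t‖ ^ 2 ∂μ := fun p => by
    have h := L2.inner_def (𝕜 := ℂ) p p
    simp_rw [inner_self_eq_norm_sq_to_K] at h
    have h2 : ∫ t, ((‖p t‖ : ℂ)) ^ 2 ∂μ = ((∫ t, ‖p t‖ ^ 2 ∂μ : ℝ) : ℂ) := by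
      rw [← integral_complex_ofReal]
      simp
    have h3 : ((‖p‖ ^ 2 : ℝ) : ℂ) = ((∫ t, ‖p t‖ ^ 2 ∂μ : ℝ) : ℂ) := by
      rw [← h2, Complex.ofReal_pow]; exact h
    exact_mod_cast h3
  have hP : ∀ n, ∀ᵐ t ∂μ, P n t = H n t := fun n => (hH n).coeFn_toLp
  have hdist : ∀ n (q : Lp (EuclideanSpace ℂ (Fin d)) 2 μ),
      ‖P n - q‖ ^ 2 = ∫ t, ∑ i, ‖G n t i - (q t) i‖ ^ 2 ∂μ := fun n q => by
    rw [nsq]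
    refine integral_congr_ae ?_
    filter_upwards [hP n, Lp.coeFn_sub (P n) q] with t h1 h2
    rw [h2, Pi.sub_apply, h1, EuclideanSpace.norm_sq_eq]
    simp [H]
  have hcau : CauchySeq P := by
    rw [Metric.cauchySeq_iff]
    intro ε hε
    obtain ⟨N, hN⟩ := hC (ε ^ 2) (by positivity)
    refine ⟨N, fun m hm n hn => ?_⟩
    rw [dist_eq_norm]
    refine lt_of_pow_lt_pow_left₀ 2 hε.le ?_
    rw [hdist]
    refine lt_of_eq_of_lt (integral_congr_ae ?_) (hN m hm n hn)
    filter_upwards [hP n] with t h1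
    rw [h1]
  obtain ⟨p, hp⟩ := cauchySeq_tendsto_of_complete hcau
  refine ⟨fun t => WithLp.ofLp (p t), (WithLp.measurable_ofLp 2 _).comp
    (Lp.stronglyMeasurable p).measurable, ?_, ?_, ?_⟩
  · have := (memLp_two_iff_integrable_sq_norm (Lp.aestronglyMeasurable p)).1 (Lp.memLp p)
    simpa [EuclideanSpace.norm_sq_eq] using this
  · have h := (tendsto_iff_norm_sub_tendsto_zero.1 hp).pow 2
    simp_rw [hdist] at h
    simpa using h
  · obtain ⟨ns, -, hns⟩ := (tendstoInMeasure_of_tendsto_Lp hp).exists_seq_tendsto_ae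
    refine ⟨ns, ?_⟩
    filter_upwards [hns, ae_all_iff.2 hP] with t ht h1
    simp_rw [h1] at ht
    exact ((PiLp.continuous_ofLp 2 _).tendsto _).comp ht

/-- For a matrix measure `M` with trace measure `μ = tr_M` and density
`D = D_M ≥ 0`, the map `f ↦ √D · f` induces a well-defined linear isometry from `L²(M)`
onto the closed subspace `L²_D = {g ∈ (L²(μ))^d : g t ∈ Ran (D t) a.e.}`; in particular
`L²(M)` is complete. Here `sD` denotes the pointwise nonnegative square root of `D`. -/
theorem L2M_unitary_to_L2D_and_complete
    {Ω : Type*} [MeasurableSpace Ω] {d : ℕ}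
    (M : Set Ω → Matrix (Fin d) (Fin d) ℂ)
    (μ : Measure Ω) [IsFiniteMeasure μ]
    (D : Ω → Matrix (Fin d) (Fin d) ℂ)
    (hpos : ∀ ω : Set Ω, MeasurableSet ω → (M ω).PosSemidef)
    (hμ : ∀ ω : Set Ω, MeasurableSet ω → (M ω).trace = ((μ ω).toReal : ℂ))
    (hDmeas : ∀ i j, Measurable fun t => D t i j)
    (hDpos : ∀ t, (D t).PosSemidef)
    (hden : ∀ ω : Set Ω, MeasurableSet ω → ∀ i j, M ω i j = ∫ t in ω, D t i j ∂μ)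
    -- `sD` is the pointwise nonnegative square root of `D`
    (sD : Ω → Matrix (Fin d) (Fin d) ℂ)
    (hsDmeas : ∀ i j, Measurable fun t => sD t i j)
    (hsD : ∀ t, (sD t).PosSemidef ∧ sD t * sD t = D t) :
    -- (isometry, pointwise): ⟨D t x, x⟩ = ‖√(D t) x‖² , hence ⟨⟨f⟩⟩_M = ‖√D f‖²_{(L²(μ))^d}
    (∀ (t : Ω) (x : Fin d → ℂ),
      (star x ⬝ᵥ ((D t) *ᵥ x)).re = ∑ i, ‖((sD t) *ᵥ x) i‖ ^ 2) ∧
    -- (well-defined & injective): the zero layer corresponds exactly to √D f = 0 a.e.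
    (∀ f : Ω → Fin d → ℂ, MemL2M μ D f →
      (quadInt μ D f = 0 ↔ ∀ᵐ t ∂μ, (sD t) *ᵥ f t = 0)) ∧
    -- the image lies in L²_D: √(D t) f t ∈ Ran (D t)
    (∀ (t : Ω) (x : Fin d → ℂ), ∃ v : Fin d → ℂ, (D t) *ᵥ v = (sD t) *ᵥ x) ∧
    -- (surjectivity onto L²_D)
    (∀ g : Ω → Fin d → ℂ, Measurable g →
      Integrable (fun t => ∑ i, ‖g t i‖ ^ 2) μ →
      (∀ᵐ t ∂μ, ∃ v : Fin d → ℂ, (D t) *ᵥ v = g t) →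
      ∃ f : Ω → Fin d → ℂ, MemL2M μ D f ∧ ∀ᵐ t ∂μ, (sD t) *ᵥ f t = g t) ∧
    -- (completeness of L²(M)): every Cauchy sequence for the seminorm converges
    (∀ F : ℕ → Ω → Fin d → ℂ, (∀ n, MemL2M μ D (F n)) →
      (∀ ε : ℝ, 0 < ε → ∃ N : ℕ, ∀ m ≥ N, ∀ n ≥ N,
        quadInt μ D (fun t => F m t - F n t) < ε) →
      ∃ f : Ω → Fin d → ℂ, MemL2M μ D f ∧
        Tendsto (fun n => quadInt μ D (fun t => F n t - f t)) atTop (nhds 0)) := by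
  have hS : ∀ t, (sD t).PosSemidef := fun t => (hsD t).1
  have hD : ∀ t, D t = sD t * sD t := fun t => (hsD t).2.symm
  have iso : ∀ (t : Ω) (x : Fin d → ℂ),
      (star x ⬝ᵥ ((D t) *ᵥ x)).re = ∑ i, ‖((sD t) *ᵥ x) i‖ ^ 2 := fun t x => by
    rw [hD]; exact aux_iso (hS t) x
  have ran : ∀ (t : Ω) (x : Fin d → ℂ), ∃ v : Fin d → ℂ, (D t) *ᵥ v = (sD t) *ᵥ x := fun t x => by
    rw [hD]; exact aux_range (hS t) x
  have surj : ∀ g : Ω → Fin d → ℂ, Measurable g →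
      Integrable (fun t => ∑ i, ‖g t i‖ ^ 2) μ →
      (∀ᵐ t ∂μ, ∃ v : Fin d → ℂ, (D t) *ᵥ v = g t) →
      ∃ f : Ω → Fin d → ℂ, MemL2M μ D f ∧ ∀ᵐ t ∂μ, (sD t) *ᵥ f t = g t := by
    intro g hg hgi hr
    simp_rw [hD] at hr
    obtain ⟨f, hf, hfg⟩ := aux_surj μ sD hsDmeas hS g hg hr
    refine ⟨f, ⟨hf, hgi.congr ?_⟩, hfg⟩
    filter_upwards [hfg] with t ht
    rw [iso, ht]
  refine ⟨iso, ?_, ran, surj, ?_⟩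
  · rintro f ⟨hf, hfi⟩
    unfold quadInt
    simp_rw [iso] at hfi ⊢
    rw [integral_eq_zero_iff_of_nonneg (fun t => Finset.sum_nonneg fun i _ => sq_nonneg _) hfi]
    refine eventually_congr (Eventually.of_forall fun t => ?_)
    rw [Pi.zero_apply, Finset.sum_eq_zero_iff_of_nonneg (fun i _ => sq_nonneg _)]
    simp [funext_iff]
  · intro F hF hC
    have hq : ∀ a b : Ω → Fin d → ℂ, quadInt μ D (fun t => a t - b t) =
        ∫ t, ∑ i, ‖(sD t *ᵥ a t) i - (sD t *ᵥ b t) i‖ ^ 2 ∂μ := fun a b => by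
      unfold quadInt
      simp_rw [iso, Matrix.mulVec_sub, Pi.sub_apply]
    simp_rw [hq] at hC
    obtain ⟨g, hg, hgi, hlim, ns, hns⟩ := aux_complete μ (fun n t => sD t *ᵥ F n t)
      (fun n => aux_meas_mulVec hsDmeas (hF n).1)
      (fun n => by have := (hF n).2; simp_rw [iso] at this; exact this) hC
    obtain ⟨f, hf, hfg⟩ := surj g hg hgi (by
      filter_upwards [hns] with t ht
      have hcl : IsClosed (LinearMap.range (D t).mulVecLin : Set (Fin d → ℂ)) :=
        Submodule.closed_of_finiteDimensional _
      have := hcl.mem_of_tendsto ht (Eventually.of_forall fun k => by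
        obtain ⟨v, hv⟩ := ran t (F (ns k) t)
        exact ⟨v, by simpa using hv⟩)
      obtain ⟨v, hv⟩ := this
      exact ⟨v, by simpa using hv⟩)
    refine ⟨f, hf, hlim.congr fun n => ?_⟩
    rw [hq]
    refine integral_congr_ae ?_
    filter_upwards [hfg] with t ht
    rw [ht]
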